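/- arXiv:1106.4918 — 2 statements merged into one kernel-verified Lean document; each statement's English description precedes it below -/
import Mathlib

section
/- (Key Fact) Let G be a set of labeled polynomials (each h^[w] ∈ G satisfies h = w·f⃗). Let f^[u] and g^[v] be labeled polynomials with u ≠ 0, v ≠ 0, and s(u) = s(v), and suppose neither f^[u] nor g^[v] is reducible by G. Assume further (Condition 2) that for every labeled polynomial f̄^[ū] (f̄ = ū·f⃗) with f̄ ≠ 0 and s(ū) ≺₂ s(u), there exists h^[w] ∈ G with h ≠ 0, lpp(h) dividing lpp(f̄), and s(x^t w) ⪯₂ s(ū), where x^t = lpp(f̄)/lpp(h). Then lpp(f) = lpp(g); in particular f = 0 if and only if g = 0, and if both are nonzero they have the same leading power product. -/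
/-!
Suppose `lpp g ≺₁ lpp f`. With `c = lc(u) / lc(v)`, the labeled polynomial `f - c g`, labeled by
`u - c v`, has the same leading power product as `f`, while its signature lies strictly below the
common signature of `u` and `v`, whose terms cancel. Condition 2 applied to it yields an element
of `G` that reduces `f^[u]`, a contradiction (`reducible_of_lpp_lt`). The situation is symmetric
in `f` and `g`, so their leading power products agree.
-/

open MvPolynomial

noncomputable section

variable {k : Type*} [Field k] {m n : ℕ}

/-- The leading power product of a polynomial, w.r.t. the monomial order `L1`;
`⊥` for the zero polynomial. -/
def lpp (L1 : LinearOrder (Fin n →₀ ℕ)) (f : MvPolynomial (Fin n) k) :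
    WithBot (Fin n →₀ ℕ) :=
  @Finset.max _ L1 f.support

/-- The leading coefficient of a polynomial w.r.t. the monomial order `L1`. -/
def plc (L1 : LinearOrder (Fin n →₀ ℕ)) (f : MvPolynomial (Fin n) k) : k :=
  WithBot.recBotCoe 0 (fun α => MvPolynomial.coeff α f) (lpp L1 f)

/-- The support of a module element `u ∈ R^m`, as a set of module monomials `(i, α)`. -/
def msupport (u : Fin m → MvPolynomial (Fin n) k) : Finset (Fin m × (Fin n →₀ ℕ)) :=
  Finset.univ.biUnion fun i => (u i).support.image fun α => (i, α)

/-- The signature of a module element, w.r.t. the module term order `L2`;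
`⊥` for the zero element. -/
def sig (L2 : LinearOrder (Fin m × (Fin n →₀ ℕ))) (u : Fin m → MvPolynomial (Fin n) k) :
    WithBot (Fin m × (Fin n →₀ ℕ)) :=
  @Finset.max _ L2 (msupport u)

/-- The leading coefficient of a module element (the coefficient at its signature). -/
def mlc (L2 : LinearOrder (Fin m × (Fin n →₀ ℕ))) (u : Fin m → MvPolynomial (Fin n) k) : k :=
  WithBot.recBotCoe 0 (fun p => MvPolynomial.coeff p.2 (u p.1)) (sig L2 u)

/-- The strict order on `WithBot β` induced by a linear order `L` on `β`
(`⊥` smaller than everything). -/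
def bslt {β : Type*} (L : LinearOrder β) (a b : WithBot β) : Prop :=
  WithBot.recBotCoe False (fun y => WithBot.recBotCoe True (fun x => L.lt x y) a) b

/-- The order on `WithBot β` induced by a linear order `L` on `β`. -/
def bsle {β : Type*} (L : LinearOrder β) (a b : WithBot β) : Prop :=
  WithBot.recBotCoe (a = ⊥) (fun y => WithBot.recBotCoe True (fun x => L.le x y) a) b

/-- Multiplication of a module element by the monomial `x^t`. -/
def tsmul (t : Fin n →₀ ℕ) (u : Fin m → MvPolynomial (Fin n) k) :
    Fin m → MvPolynomial (Fin n) k :=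
  fun i => monomial t (1 : k) * u i

/-- `u ⬝ f⃗ = u₁ f₁ + ⋯ + u_m f_m`. -/
def dotf (fvec u : Fin m → MvPolynomial (Fin n) k) : MvPolynomial (Fin n) k :=
  ∑ i, u i * fvec i

/-- The least common multiple of two monomials (componentwise max of exponents). -/
def mlcm (α β : Fin n →₀ ℕ) : Fin n →₀ ℕ :=
  Finsupp.zipWith max (max_self 0) α β

/-- `G` is a labeled Gröbner basis of `(f₁, …, f_m)`. -/
def IsLabeledGB (L1 : LinearOrder (Fin n →₀ ℕ)) (L2 : LinearOrder (Fin m × (Fin n →₀ ℕ)))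
    (fvec : Fin m → MvPolynomial (Fin n) k)
    (G : Set (MvPolynomial (Fin n) k × (Fin m → MvPolynomial (Fin n) k))) : Prop :=
  ∀ (f : MvPolynomial (Fin n) k) (u : Fin m → MvPolynomial (Fin n) k),
    f = dotf fvec u → f ≠ 0 →
      ∃ gv ∈ G, gv.1 ≠ 0 ∧ ∃ t : Fin n →₀ ℕ,
        WithBot.map (fun β => t + β) (lpp L1 gv.1) = lpp L1 f ∧
        bsle L2 (sig L2 (tsmul t gv.2)) (sig L2 u)

/-- `f^[u]` has a standard representation w.r.t. the set `B` of labeled polynomials. -/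
def HasStdRep (L1 : LinearOrder (Fin n →₀ ℕ)) (L2 : LinearOrder (Fin m × (Fin n →₀ ℕ)))
    (B : Set (MvPolynomial (Fin n) k × (Fin m → MvPolynomial (Fin n) k)))
    (f : MvPolynomial (Fin n) k) (u : Fin m → MvPolynomial (Fin n) k) : Prop :=
  ∃ (N : ℕ) (p : Fin N → MvPolynomial (Fin n) k)
      (g : Fin N → MvPolynomial (Fin n) k × (Fin m → MvPolynomial (Fin n) k)),
    (∀ i, g i ∈ B) ∧ f = ∑ i, p i * (g i).1 ∧
    (∀ i, bsle L1 (lpp L1 (p i * (g i).1)) (lpp L1 f)) ∧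
    (∀ i, bsle L2 (sig L2 (fun j => p i * (g i).2 j)) (sig L2 u))

/-- The polynomial part of the S-polynomial of the critical pair `(x^tg, gv, x^th, hw)`. -/
def spolyP (L1 : LinearOrder (Fin n →₀ ℕ))
    (gv hw : MvPolynomial (Fin n) k × (Fin m → MvPolynomial (Fin n) k))
    (tg th : Fin n →₀ ℕ) : MvPolynomial (Fin n) k :=
  monomial tg (1 : k) * gv.1 - C (plc L1 gv.1 / plc L1 hw.1) * (monomial th (1 : k) * hw.1)

/-- The module part of the S-polynomial of the critical pair `(x^tg, gv, x^th, hw)`. -/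
def spolyV (L1 : LinearOrder (Fin n →₀ ℕ))
    (gv hw : MvPolynomial (Fin n) k × (Fin m → MvPolynomial (Fin n) k))
    (tg th : Fin n →₀ ℕ) : Fin m → MvPolynomial (Fin n) k :=
  fun j =>
    monomial tg (1 : k) * gv.2 j - C (plc L1 gv.1 / plc L1 hw.1) * (monomial th (1 : k) * hw.2 j)

/-- `f^[u]` is reducible (in one step, by a one-side-reduction) by the set `G`
of labeled polynomials. -/
def Reducible (L1 : LinearOrder (Fin n →₀ ℕ)) (L2 : LinearOrder (Fin m × (Fin n →₀ ℕ)))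
    (G : Set (MvPolynomial (Fin n) k × (Fin m → MvPolynomial (Fin n) k)))
    (f : MvPolynomial (Fin n) k) (u : Fin m → MvPolynomial (Fin n) k) : Prop :=
  f ≠ 0 ∧ ∃ hw ∈ G, hw.1 ≠ 0 ∧ ∃ t : Fin n →₀ ℕ,
    WithBot.map (fun β => t + β) (lpp L1 hw.1) = lpp L1 f ∧
    bslt L2 (sig L2 (tsmul t hw.2)) (sig L2 u)

/-- `x^t ⬝ fu` is generalized rewritable by the finite set `B` (w.r.t. the strict partial
order `r` on labeled polynomials). -/
def GenRewritable (L2 : LinearOrder (Fin m × (Fin n →₀ ℕ)))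
    (B : Finset (MvPolynomial (Fin n) k × (Fin m → MvPolynomial (Fin n) k)))
    (r : (MvPolynomial (Fin n) k × (Fin m → MvPolynomial (Fin n) k)) →
         (MvPolynomial (Fin n) k × (Fin m → MvPolynomial (Fin n) k)) → Prop)
    (t : Fin n →₀ ℕ)
    (fu : MvPolynomial (Fin n) k × (Fin m → MvPolynomial (Fin n) k)) : Prop :=
  ∃ gv ∈ B, gv.2 ≠ 0 ∧
    (∃ pq qq : Fin m × (Fin n →₀ ℕ), sig L2 gv.2 = ↑pq ∧ sig L2 fu.2 = ↑qq ∧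
      pq.1 = qq.1 ∧ ∃ γ : Fin n →₀ ℕ, pq.2 + γ = t + qq.2) ∧
    r gv fu

/-- The position-over-term module order: `(i, α) ≺ (j, β)` iff `i > j`,
or `i = j` and `α ≺₁ β`. -/
def potLT (L1 : LinearOrder (Fin n →₀ ℕ)) (p q : Fin m × (Fin n →₀ ℕ)) : Prop :=
  q.1 < p.1 ∨ (p.1 = q.1 ∧ L1.lt p.2 q.2)

/-- `p` is the signature of the module element `w` w.r.t. the linear order `lt`
on module monomials. -/
def IsSigWrt (lt : (Fin m × (Fin n →₀ ℕ)) → (Fin m × (Fin n →₀ ℕ)) → Prop)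
    (w : Fin m → MvPolynomial (Fin n) k) (p : Fin m × (Fin n →₀ ℕ)) : Prop :=
  p ∈ msupport w ∧ ∀ q ∈ msupport w, q ≠ p → lt q p

end

theorem bslt_iff {β : Type*} [L : LinearOrder β] (a b : WithBot β) : bslt L a b ↔ a < b := by
  induction b with
  | bot => simp [bslt]
  | coe b =>
    induction a with
    | bot => simp [bslt]
    | coe a => simp [bslt]

theorem bsle_iff {β : Type*} [L : LinearOrder β] (a b : WithBot β) : bsle L a b ↔ a ≤ b := by
  induction b with
  | bot => simp [bsle]
  | coe b =>
    induction a with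
    | bot => simp [bsle]
    | coe a => simp [bsle]

theorem bslt_of_bsle_of_bslt {β : Type*} (L : LinearOrder β) {a b c : WithBot β}
    (hab : bsle L a b) (hbc : bslt L b c) : bslt L a c :=
  (bslt_iff a c).2 (((bsle_iff a b).1 hab).trans_lt ((bslt_iff b c).1 hbc))

/-- Supports version of: subtracting something with smaller leading monomial keeps the leading
monomial. Here `s`, `t`, `d` are the supports of the minuend, subtrahend and difference. -/
theorem max_eq_of_max_lt {β : Type*} [LinearOrder β] {s t d : Finset β}
    (hlt : t.max < s.max) (hd : ∀ x ∈ d, x ∈ s ∨ x ∈ t) (hs : ∀ x ∈ s, x ∉ t → x ∈ d) :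
    d.max = s.max := by
  apply le_antisymm
  · refine Finset.max_le fun x hx => ?_
    rcases hd x hx with h | h
    · exact Finset.le_max h
    · exact (Finset.le_max h).trans hlt.le
  · obtain ⟨a, ha⟩ : ∃ a : β, s.max = a :=
      Finset.max_of_nonempty (Finset.nonempty_iff_ne_empty.2 (by rintro rfl; simp at hlt))
    rw [ha]
    refine Finset.le_max (hs a (Finset.mem_of_max ha) fun hat => ?_)
    exact absurd (Finset.le_max hat) (by rw [← ha]; exact not_le.2 hlt)

/-- Supports version of: if the common leading monomial `p` cancels in a difference, the leading
monomial drops strictly. -/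
theorem max_lt_of_cancel {β : Type*} [LinearOrder β] {s t d : Finset β} {p : β}
    (hs : s.max = p) (ht : t.max = p) (hd : ∀ x ∈ d, x ∈ s ∨ x ∈ t) (hp : p ∉ d) :
    d.max < p := by
  refine lt_of_le_of_ne (Finset.max_le fun x hx => ?_) fun h => hp (Finset.mem_of_max h)
  rcases hd x hx with h | h
  · exact hs ▸ Finset.le_max h
  · exact ht ▸ Finset.le_max h

theorem mem_msupport {k : Type*} [Field k] {m n : ℕ} (u : Fin m → MvPolynomial (Fin n) k)
    (p : Fin m × (Fin n →₀ ℕ)) : p ∈ msupport u ↔ coeff p.2 (u p.1) ≠ 0 := by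
  obtain ⟨i, α⟩ := p
  simp [msupport]

theorem lpp_sub_smul {k : Type*} [Field k] {n : ℕ} (L1 : LinearOrder (Fin n →₀ ℕ))
    (f g : MvPolynomial (Fin n) k) (c : k) (h : bslt L1 (lpp L1 g) (lpp L1 f)) :
    lpp L1 (f - C c * g) = lpp L1 f := by
  refine @max_eq_of_max_lt _ L1 _ _ _ ((@bslt_iff _ L1 _ _).1 h) ?_ ?_
  · intro x hx
    by_contra! hcon
    simp_all [mem_support_iff]
  · intro x hx hxt
    simp_all [mem_support_iff]

theorem sig_sub_lt {k : Type*} [Field k] {m n : ℕ} (L2 : LinearOrder (Fin m × (Fin n →₀ ℕ)))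
    (u v : Fin m → MvPolynomial (Fin n) k) (hu : u ≠ 0) (hsig : sig L2 u = sig L2 v) :
    ∃ c : k, bslt L2 (sig L2 fun i => u i - C c * v i) (sig L2 u) := by
  obtain ⟨p, hp⟩ : ∃ p : Fin m × (Fin n →₀ ℕ), sig L2 u = p := by
    obtain ⟨i, hi⟩ := Function.ne_iff.1 hu
    obtain ⟨α, hα⟩ := MvPolynomial.ne_zero_iff.1 hi
    exact @Finset.max_of_mem _ L2 _ (i, α) ((mem_msupport u _).2 hα)
  have hq : sig L2 v = p := hsig ▸ hp
  have hpv := (mem_msupport v p).1 (@Finset.mem_of_max _ L2 _ _ hq)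
  refine ⟨coeff p.2 (u p.1) / coeff p.2 (v p.1), ?_⟩
  rw [hp]
  refine (@bslt_iff _ L2 _ _).2 (@max_lt_of_cancel _ L2 _ _ _ p hp hq ?_ ?_)
  · intro x hx
    by_contra! hcon
    simp_all [mem_msupport]
  · rw [mem_msupport]
    simp [hpv]

theorem reducible_of_lpp_lt {k : Type*} [Field k] {m n : ℕ}
    (L1 : LinearOrder (Fin n →₀ ℕ)) (L2 : LinearOrder (Fin m × (Fin n →₀ ℕ)))
    (fvec : Fin m → MvPolynomial (Fin n) k)
    (G : Set (MvPolynomial (Fin n) k × (Fin m → MvPolynomial (Fin n) k)))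
    (f g : MvPolynomial (Fin n) k) (u v : Fin m → MvPolynomial (Fin n) k)
    (hf : f = dotf fvec u) (hg : g = dotf fvec v)
    (hu : u ≠ 0) (hsig : sig L2 u = sig L2 v)
    (hC2 : ∀ (f' : MvPolynomial (Fin n) k) (u' : Fin m → MvPolynomial (Fin n) k),
      f' = dotf fvec u' → f' ≠ 0 → bslt L2 (sig L2 u') (sig L2 u) →
      ∃ hw ∈ G, hw.1 ≠ 0 ∧ ∃ t : Fin n →₀ ℕ,
        WithBot.map (fun β => t + β) (lpp L1 hw.1) = lpp L1 f' ∧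
        bsle L2 (sig L2 (tsmul t hw.2)) (sig L2 u'))
    (hlt : bslt L1 (lpp L1 g) (lpp L1 f)) : Reducible L1 L2 G f u := by
  obtain ⟨c, hc⟩ := sig_sub_lt L2 u v hu hsig
  have hlpp := lpp_sub_smul L1 f g c hlt
  have hf0 : lpp L1 f ≠ ⊥ := by
    intro h
    rw [h] at hlt
    exact hlt
  have hbot : lpp L1 (0 : MvPolynomial (Fin n) k) = ⊥ := by simp [lpp]
  have hdot : f - C c * g = dotf fvec fun i => u i - C c * v i := by
    simp only [hf, hg, dotf, Finset.mul_sum, sub_mul, Finset.sum_sub_distrib, mul_assoc]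
  obtain ⟨hw, hwG, hw0, t, ht, hle⟩ := hC2 _ _ hdot
    (fun h => hf0 (by rw [← hlpp, h, hbot])) hc
  refine ⟨fun h => hf0 (by rw [h, hbot]), hw, hwG, hw0, t, ht.trans hlpp, ?_⟩
  exact bslt_of_bsle_of_bslt L2 hle hc

/-- **Key Fact.** Let `G` be a set of labeled polynomials, and let `f^[u]`, `g^[v]` be
labeled polynomials with `u ≠ 0`, `v ≠ 0`, with the same signature, neither of which is
reducible by `G`.  Assume moreover (Condition 2) that for every labeled polynomial
`f̄^[ū]` with `f̄ ≠ 0` and `s(ū) ≺₂ s(u)` there is `h^[w] ∈ G` with `h ≠ 0`,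
`lpp(h) ∣ lpp(f̄)` and `s(x^t w) ⪯₂ s(ū)` where `x^t = lpp(f̄)/lpp(h)`.
Then `lpp(f) = lpp(g)`; in particular `f = 0 ↔ g = 0`. -/
theorem key_fact (k : Type*) [Field k] (n m : ℕ)
    (L1 : LinearOrder (Fin n →₀ ℕ)) (L2 : LinearOrder (Fin m × (Fin n →₀ ℕ)))
    (h1add : ∀ a b c : Fin n →₀ ℕ, L1.lt a b → L1.lt (a + c) (b + c))
    (h1wf : WellFounded L1.lt)
    (h2add : ∀ (p q : Fin m × (Fin n →₀ ℕ)) (γ : Fin n →₀ ℕ),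
      L2.lt p q → L2.lt (p.1, p.2 + γ) (q.1, q.2 + γ))
    (h21 : ∀ (i : Fin m) (α β : Fin n →₀ ℕ), L1.lt α β → L2.lt (i, α) (i, β))
    (fvec : Fin m → MvPolynomial (Fin n) k)
    (G : Set (MvPolynomial (Fin n) k × (Fin m → MvPolynomial (Fin n) k)))
    (hGlabeled : ∀ p ∈ G, p.1 = dotf fvec p.2)
    (f g : MvPolynomial (Fin n) k) (u v : Fin m → MvPolynomial (Fin n) k)
    (hf : f = dotf fvec u) (hg : g = dotf fvec v)
    (hu : u ≠ 0) (hv : v ≠ 0)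
    (hsig : sig L2 u = sig L2 v)
    (hfnred : ¬ Reducible L1 L2 G f u) (hgnred : ¬ Reducible L1 L2 G g v)
    (hC2 : ∀ (f' : MvPolynomial (Fin n) k) (u' : Fin m → MvPolynomial (Fin n) k),
      f' = dotf fvec u' → f' ≠ 0 → bslt L2 (sig L2 u') (sig L2 u) →
      ∃ hw ∈ G, hw.1 ≠ 0 ∧ ∃ t : Fin n →₀ ℕ,
        WithBot.map (fun β => t + β) (lpp L1 hw.1) = lpp L1 f' ∧
        bsle L2 (sig L2 (tsmul t hw.2)) (sig L2 u')) :
    lpp L1 f = lpp L1 g ∧ (f = 0 ↔ g = 0) := by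
  have hlpp : lpp L1 f = lpp L1 g := by
    rcases @lt_trichotomy _ (@WithBot.linearOrder _ L1) (lpp L1 f) (lpp L1 g) with h | h | h
    · refine absurd (reducible_of_lpp_lt L1 L2 fvec G g f v u hg hf hv hsig.symm ?_
        ((@bslt_iff _ L1 _ _).2 h)) hgnred
      rw [← hsig]
      exact hC2
    · exact h
    · exact absurd (reducible_of_lpp_lt L1 L2 fvec G f g u v hf hg hu hsig hC2
        ((@bslt_iff _ L1 _ _).2 h)) hfnred
  have hzero (q : MvPolynomial (Fin n) k) : lpp L1 q = ⊥ ↔ q = 0 := by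
    rw [lpp, @Finset.max_eq_bot _ L1, MvPolynomial.support_eq_empty]
  exact ⟨hlpp, by rw [← hzero f, ← hzero g, hlpp]⟩
end

section
/- Let G be a finite set of labeled polynomials containing f_i^[e_i] for every i = 1,...,m. If for every critical pair of two elements of G the corresponding S-polynomial has a standard representation w.r.t. G, then G is a labeled Gröbner basis of (f_1,...,f_m). -/
/-!
Fix a labeled polynomial `f^[u]` with `f ≠ 0` and let `σ` be the signature of `u`. For a predicate
`P` on monomials let `W P` (`boundedSpan`) be the `k`-span of all multiples `x^t g` of elements
`g^[v]` of `G` whose leading monomial satisfies `P` and whose label satisfies `s(x^t v) ⪯ σ`.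
Since `G` contains every `fᵢ^[eᵢ]`, the expansion `f = ∑ uᵢ fᵢ` shows `f ∈ W (True)`.

If two generators have the same leading monomial `τ`, then a suitable combination of them that
cancels `τ` is a monomial multiple of an S-polynomial, whose standard representation puts it in
`W (· ≺ τ)` (`generator_sub_mem`). Hence `W (· ⪯ τ) = W (· ≺ τ) + k h` for any single generator `h`
with leading monomial `τ`, if there is one. Well-founded induction on `τ` then shows
(`exists_generator_of_mem`) that the leading monomial of every nonzero element of `W (· ⪯ τ)` is the
leading monomial of some generator: either `τ` is the leading monomial of the element and `h` is the
generator, or the element already lies in `W (· ≺ τ)`. This generator has signature at most `σ`, as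
required.
-/

open MvPolynomial

/-! ### Leading monomials and signatures through supports -/

section Aux

variable {k : Type*} [Field k] {m n : ℕ}

lemma max_eq_coe_iff {β : Type*} (L : LinearOrder β) (S : Finset β) (a : β) :
    @Finset.max _ L S = (a : WithBot β) ↔ a ∈ S ∧ ∀ x ∈ S, L.le x a := by
  let := L
  constructor
  · intro h
    exact ⟨Finset.mem_of_max h, fun x hx => Finset.le_max_of_eq hx h⟩
  · rintro ⟨ha, h⟩
    apply le_antisymm
    · exact Finset.max_le fun x hx => WithBot.coe_le_coe.2 (h x hx)
    · exact Finset.le_max ha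

/-- Comparing maxima amounts to cofinality; this trades `bsle` for statements about supports. -/
lemma bsle_max_iff {β : Type*} (L : LinearOrder β) (S T : Finset β) :
    bsle L (@Finset.max _ L S) (@Finset.max _ L T) ↔ ∀ x ∈ S, ∃ y ∈ T, L.le x y := by
  let := L
  rcases S.eq_empty_or_nonempty with rfl | hS
  · rcases T.eq_empty_or_nonempty with rfl | hT
    · simp [bsle]
    · obtain ⟨b, hb⟩ := Finset.max_of_nonempty hT
      rw [hb]
      simp [bsle]
  · obtain ⟨a, ha⟩ := Finset.max_of_nonempty hS
    have ha' := (max_eq_coe_iff L S a).1 ha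
    rcases T.eq_empty_or_nonempty with rfl | hT
    · rw [ha]
      simp only [bsle, Finset.max_empty, WithBot.recBotCoe_bot, WithBot.coe_ne_bot, false_iff]
      intro h
      obtain ⟨y, hy, -⟩ := h a ha'.1
      simp at hy
    · obtain ⟨b, hb⟩ := Finset.max_of_nonempty hT
      have hb' := (max_eq_coe_iff L T b).1 hb
      rw [ha, hb]
      simp only [bsle, WithBot.recBotCoe_coe]
      constructor
      · intro h x hx
        exact ⟨b, hb'.1, le_trans (ha'.2 x hx) h⟩
      · intro h
        obtain ⟨y, hy, hay⟩ := h a ha'.1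
        exact le_trans hay (hb'.2 y hy)

lemma exists_max_mem {β : Type*} (L : LinearOrder β) (S : Finset β) (hS : S.Nonempty) :
    ∃ a ∈ S, ∀ x ∈ S, L.le x a := by
  let := L
  obtain ⟨a, ha⟩ := Finset.max_of_nonempty hS
  exact ⟨a, (max_eq_coe_iff L S a).1 ha⟩

lemma bsle_total' {β : Type*} (L : LinearOrder β) (a b : WithBot β) :
    bsle L a b ∨ bsle L b a := by
  induction a using WithBot.recBotCoe <;> induction b using WithBot.recBotCoe <;>
    simp [bsle, L.le_total]

lemma mem_msupport_iff (u : Fin m → MvPolynomial (Fin n) k) (p : Fin m × (Fin n →₀ ℕ)) :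
    p ∈ msupport u ↔ coeff p.2 (u p.1) ≠ 0 := by
  obtain ⟨i, α⟩ := p
  simp [msupport]

lemma lpp_eq_coe_iff (L1 : LinearOrder (Fin n →₀ ℕ)) (f : MvPolynomial (Fin n) k)
    (α : Fin n →₀ ℕ) :
    lpp L1 f = (α : WithBot (Fin n →₀ ℕ)) ↔
      coeff α f ≠ 0 ∧ ∀ β, coeff β f ≠ 0 → L1.le β α := by
  simp [lpp, max_eq_coe_iff]

lemma exists_lpp_eq (L1 : LinearOrder (Fin n →₀ ℕ)) (f : MvPolynomial (Fin n) k) (hf : f ≠ 0) :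
    ∃ α : Fin n →₀ ℕ, lpp L1 f = (α : WithBot (Fin n →₀ ℕ)) := by
  obtain ⟨a, ha, h⟩ := exists_max_mem L1 f.support (by simpa using hf)
  exact ⟨a, (max_eq_coe_iff L1 _ _).2 ⟨ha, h⟩⟩

lemma plc_eq (L1 : LinearOrder (Fin n →₀ ℕ)) (f : MvPolynomial (Fin n) k)
    (α : Fin n →₀ ℕ) (h : lpp L1 f = (α : WithBot (Fin n →₀ ℕ))) : plc L1 f = coeff α f := by
  simp [plc, h]

lemma sig_eq_coe_iff (L2 : LinearOrder (Fin m × (Fin n →₀ ℕ)))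
    (u : Fin m → MvPolynomial (Fin n) k) (p : Fin m × (Fin n →₀ ℕ)) :
    sig L2 u = (p : WithBot (Fin m × (Fin n →₀ ℕ))) ↔
      coeff p.2 (u p.1) ≠ 0 ∧ ∀ i α, coeff α (u i) ≠ 0 → L2.le (i, α) p := by
  simp [sig, max_eq_coe_iff, mem_msupport_iff]

lemma coeff_monomial_mul_ne_zero {t α : Fin n →₀ ℕ} {f : MvPolynomial (Fin n) k}
    (h : coeff α (monomial t (1 : k) * f) ≠ 0) : ∃ β, α = t + β ∧ coeff β f ≠ 0 := by
  rw [coeff_monomial_mul'] at h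
  split_ifs at h with hle
  · exact ⟨α - t, (add_tsub_cancel_of_le hle).symm, by simpa using h⟩
  · exact absurd rfl h

/-! ### Compatibility of the orders with multiplication -/

section Order

variable {L1 : LinearOrder (Fin n →₀ ℕ)} {L2 : LinearOrder (Fin m × (Fin n →₀ ℕ))}

lemma le_add_right_of_le
    (h1add : ∀ a b c : Fin n →₀ ℕ, L1.lt a b → L1.lt (a + c) (b + c))
    {a b : Fin n →₀ ℕ} (c : Fin n →₀ ℕ) (h : L1.le a b) : L1.le (a + c) (b + c) := by
  rcases (@le_iff_lt_or_eq _ L1.toPartialOrder a b).1 h with h | h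
  · exact @le_of_lt _ L1.toPreorder _ _ (h1add _ _ c h)
  · subst h; exact L1.le_refl _

lemma module_le_add
    (h2add : ∀ (p q : Fin m × (Fin n →₀ ℕ)) (γ : Fin n →₀ ℕ),
      L2.lt p q → L2.lt (p.1, p.2 + γ) (q.1, q.2 + γ))
    {p q : Fin m × (Fin n →₀ ℕ)} (c : Fin n →₀ ℕ) (h : L2.le p q) :
    L2.le (p.1, p.2 + c) (q.1, q.2 + c) := by
  rcases (@le_iff_lt_or_eq _ L2.toPartialOrder p q).1 h with h | h
  · exact @le_of_lt _ L2.toPreorder _ _ (h2add _ _ c h)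
  · subst h; exact L2.le_refl _

lemma module_le_of_le
    (h21 : ∀ (i : Fin m) (α β : Fin n →₀ ℕ), L1.lt α β → L2.lt (i, α) (i, β))
    (i : Fin m) {a b : Fin n →₀ ℕ} (h : L1.le a b) : L2.le (i, a) (i, b) := by
  rcases (@le_iff_lt_or_eq _ L1.toPartialOrder a b).1 h with h | h
  · exact @le_of_lt _ L2.toPreorder _ _ (h21 _ _ _ h)
  · subst h; exact L2.le_refl _

/-- The product of two polynomials has, at the product of their leading monomials, the product of
the leading coefficients. -/
lemma coeff_add_mul
    (h1add : ∀ a b c : Fin n →₀ ℕ, L1.lt a b → L1.lt (a + c) (b + c))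
    {p q : MvPolynomial (Fin n) k} {b d : Fin n →₀ ℕ}
    (hp : ∀ a, coeff a p ≠ 0 → L1.le a b) (hq : ∀ a, coeff a q ≠ 0 → L1.le a d) :
    coeff (b + d) (p * q) = coeff b p * coeff d q := by
  classical
  rw [coeff_mul]
  refine Finset.sum_eq_single (b, d) ?_ ?_
  · rintro ⟨x, y⟩ hxy hne
    rw [Finset.HasAntidiagonal.mem_antidiagonal] at hxy
    simp only at hxy ⊢
    by_contra hmul
    have hx := hp x (left_ne_zero_of_mul hmul)
    have hy := hq y (right_ne_zero_of_mul hmul)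
    rcases (@le_iff_lt_or_eq _ L1.toPartialOrder x b).1 hx with hlt | heq
    · have h1 : L1.lt (x + y) (b + y) := h1add _ _ y hlt
      have h2 : L1.le (b + y) (b + d) := by
        rw [add_comm b y, add_comm b d]
        exact le_add_right_of_le h1add b hy
      have h3 := @lt_of_lt_of_le _ L1.toPreorder _ _ _ h1 h2
      rw [hxy] at h3
      exact @lt_irrefl _ L1.toPreorder _ h3
    · subst heq
      exact hne (by rw [add_left_cancel hxy])
  · intro h
    simp at h

end Order

/-! ### Spans of multiples of bounded signature -/

/-- The polynomials `x^t g` with `g^[v] ∈ G` and `g ≠ 0` whose leading monomial satisfies `P` and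
whose signature is at most `σ`. The signature condition `s(x^t v) ⪯ σ` is spelled out on the
support of `v`. -/
def generators (L1 : LinearOrder (Fin n →₀ ℕ)) (L2 : LinearOrder (Fin m × (Fin n →₀ ℕ)))
    (G : Finset (MvPolynomial (Fin n) k × (Fin m → MvPolynomial (Fin n) k)))
    (σ : Fin m × (Fin n →₀ ℕ)) (P : (Fin n →₀ ℕ) → Prop) : Set (MvPolynomial (Fin n) k) :=
  {h | ∃ gv ∈ G, ∃ t γ : Fin n →₀ ℕ, lpp L1 gv.1 = (γ : WithBot (Fin n →₀ ℕ)) ∧ P (t + γ) ∧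
    (∀ i β, coeff β (gv.2 i) ≠ 0 → L2.le (i, t + β) σ) ∧ h = monomial t (1 : k) * gv.1}

/-- The `k`-linear span of `generators L1 L2 G σ P`. -/
noncomputable def boundedSpan (L1 : LinearOrder (Fin n →₀ ℕ)) (L2 : LinearOrder (Fin m × (Fin n →₀ ℕ)))
    (G : Finset (MvPolynomial (Fin n) k × (Fin m → MvPolynomial (Fin n) k)))
    (σ : Fin m × (Fin n →₀ ℕ)) (P : (Fin n →₀ ℕ) → Prop) :
    Submodule k (MvPolynomial (Fin n) k) :=
  Submodule.span k (generators L1 L2 G σ P)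

section Span

variable {L1 : LinearOrder (Fin n →₀ ℕ)} {L2 : LinearOrder (Fin m × (Fin n →₀ ℕ))}
  {G : Finset (MvPolynomial (Fin n) k × (Fin m → MvPolynomial (Fin n) k))}
  {σ : Fin m × (Fin n →₀ ℕ)}

lemma boundedSpan_mono {P Q : (Fin n →₀ ℕ) → Prop} (h : ∀ τ, P τ → Q τ) :
    boundedSpan L1 L2 G σ P ≤ boundedSpan L1 L2 G σ Q := by
  apply Submodule.span_mono
  rintro _ ⟨gv, hgv, t, γ, hγ, hP, hs, rfl⟩
  exact ⟨gv, hgv, t, γ, hγ, h _ hP, hs, rfl⟩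

/-- An element of the span involves only finitely many generators, so a single monomial with
property `P` bounds all their leading monomials. -/
lemma exists_bound_of_mem {P : (Fin n →₀ ℕ) → Prop} {f : MvPolynomial (Fin n) k}
    (hf : f ∈ boundedSpan L1 L2 G σ P) :
    f = 0 ∨ ∃ τ, P τ ∧ f ∈ boundedSpan L1 L2 G σ (fun α => L1.le α τ) := by
  induction hf using Submodule.span_induction with
  | mem x hx =>
    obtain ⟨gv, hgv, t, γ, hγ, hP, hs, rfl⟩ := hx
    exact Or.inr ⟨t + γ, hP, Submodule.subset_span ⟨gv, hgv, t, γ, hγ, L1.le_refl _, hs, rfl⟩⟩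
  | zero => exact Or.inl rfl
  | add x y _ _ hx hy =>
    rcases hx with rfl | ⟨τ, hτ, hx⟩
    · simpa using hy
    rcases hy with rfl | ⟨τ', hτ', hy⟩
    · rw [add_zero]
      exact Or.inr ⟨τ, hτ, hx⟩
    refine Or.inr ?_
    rcases L1.le_total τ τ' with h | h
    · exact ⟨τ', hτ', add_mem (boundedSpan_mono (fun α hα => L1.le_trans _ _ _ hα h) hx) hy⟩
    · exact ⟨τ, hτ, add_mem hx (boundedSpan_mono (fun α hα => L1.le_trans _ _ _ hα h) hy)⟩
  | smul c x _ hx =>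
    rcases hx with rfl | ⟨τ, hτ, hx⟩
    · exact Or.inl (smul_zero c)
    · exact Or.inr ⟨τ, hτ, Submodule.smul_mem _ c hx⟩

/-- The product of a polynomial `p` with `x^e g` lies in the span as soon as each of its terms
does. -/
lemma monomial_mul_mem {P : (Fin n →₀ ℕ) → Prop}
    {gv : MvPolynomial (Fin n) k × (Fin m → MvPolynomial (Fin n) k)} (hgv : gv ∈ G)
    (e : Fin n →₀ ℕ) (p : MvPolynomial (Fin n) k)
    (hP : ∀ a γ : Fin n →₀ ℕ, coeff a p ≠ 0 → lpp L1 gv.1 = (γ : WithBot (Fin n →₀ ℕ)) → P (e + a + γ))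
    (hs : gv.1 ≠ 0 → ∀ a, coeff a p ≠ 0 → ∀ i β, coeff β (gv.2 i) ≠ 0 →
      L2.le (i, e + a + β) σ) :
    monomial e (1 : k) * (p * gv.1) ∈ boundedSpan L1 L2 G σ P := by
  by_cases hg : gv.1 = 0
  · simp [hg]
  obtain ⟨γ, hγ⟩ := exists_lpp_eq L1 gv.1 hg
  have hp : monomial e (1 : k) * (p * gv.1) =
      ∑ a ∈ p.support, coeff a p • (monomial (e + a) (1 : k) * gv.1) := by
    conv_lhs => rw [p.as_sum]
    rw [Finset.sum_mul, Finset.mul_sum]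
    refine Finset.sum_congr rfl fun a _ => ?_
    rw [← mul_assoc, monomial_mul, one_mul, ← smul_mul_assoc, smul_monomial, smul_eq_mul, mul_one]
  rw [hp]
  refine Submodule.sum_mem _ fun a ha => Submodule.smul_mem _ _ (Submodule.subset_span ?_)
  rw [mem_support_iff] at ha
  exact ⟨gv, hgv, e + a, γ, hγ, hP a γ ha hγ, hs hg a ha, rfl⟩

/-- Every monomial of an element of `W (· ≺ τ)` is `≺ τ`. -/
lemma lt_of_coeff_ne_zero
    (h1add : ∀ a b c : Fin n →₀ ℕ, L1.lt a b → L1.lt (a + c) (b + c))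
    {τ : Fin n →₀ ℕ} {f : MvPolynomial (Fin n) k}
    (hf : f ∈ boundedSpan L1 L2 G σ (fun α => L1.lt α τ)) :
    ∀ α, coeff α f ≠ 0 → L1.lt α τ := by
  induction hf using Submodule.span_induction with
  | mem x hx =>
    obtain ⟨gv, hgv, t, γ, hγ, hP, hs, rfl⟩ := hx
    intro α hα
    obtain ⟨β, rfl, hβ⟩ := coeff_monomial_mul_ne_zero hα
    have h := le_add_right_of_le h1add t (((lpp_eq_coe_iff L1 _ _).1 hγ).2 β hβ)
    rw [add_comm β, add_comm γ] at h
    exact @lt_of_le_of_lt _ L1.toPreorder _ _ _ h hP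
  | zero => intro α hα; simp at hα
  | add x y _ _ hx hy =>
    intro α hα
    by_cases h : coeff α x = 0
    · exact hy α (by simpa [h] using hα)
    · exact hx α h
  | smul c x _ hx =>
    intro α hα
    refine hx α fun h => hα (by simp [h])

/-- If `s^[w]` has a standard representation, all monomials of `s` are below `lam`, and `x^e w` has
signature at most `σ`, then `x^e s` is in the span of the generators below `e + lam`. -/
lemma mem_of_hasStdRep
    (h1add : ∀ a b c : Fin n →₀ ℕ, L1.lt a b → L1.lt (a + c) (b + c))
    (h2add : ∀ (p q : Fin m × (Fin n →₀ ℕ)) (γ : Fin n →₀ ℕ),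
      L2.lt p q → L2.lt (p.1, p.2 + γ) (q.1, q.2 + γ))
    (h21 : ∀ (i : Fin m) (α β : Fin n →₀ ℕ), L1.lt α β → L2.lt (i, α) (i, β))
    {s : MvPolynomial (Fin n) k} {w : Fin m → MvPolynomial (Fin n) k}
    (hrep : HasStdRep L1 L2 (↑G) s w) {e lam : Fin n →₀ ℕ}
    (hs : ∀ α, coeff α s ≠ 0 → L1.lt α lam)
    (hw : ∀ i β, coeff β (w i) ≠ 0 → L2.le (i, e + β) σ) :
    monomial e (1 : k) * s ∈ boundedSpan L1 L2 G σ (fun α => L1.lt α (e + lam)) := by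
  obtain ⟨N, p, g, hgG, hsum, hlpp, hsig⟩ := hrep
  rw [hsum, Finset.mul_sum]
  refine Submodule.sum_mem _ fun i _ => ?_
  by_cases hp0 : p i = 0
  · simp [hp0]
  obtain ⟨b, hb⟩ := exists_lpp_eq L1 (p i) hp0
  rw [lpp_eq_coe_iff] at hb
  refine monomial_mul_mem (hgG i) e (p i) ?_ ?_
  · intro a γ ha hγ
    rw [lpp_eq_coe_iff] at hγ
    have hc := coeff_add_mul h1add hb.2 hγ.2
    have hc' : coeff (b + γ) (p i * (g i).1) ≠ 0 := by
      rw [hc]; exact mul_ne_zero hb.1 hγ.1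
    obtain ⟨y, hy, hle⟩ := (bsle_max_iff L1 _ _).1 (hlpp i) (b + γ) (by simpa using hc')
    have h1 : L1.le (a + γ) (b + γ) := le_add_right_of_le h1add γ (hb.2 a ha)
    have h2 : L1.lt (a + γ) lam :=
      @lt_of_le_of_lt _ L1.toPreorder _ _ _ (L1.le_trans _ _ _ h1 hle)
        (hs y (by simpa using hy))
    have h3 := h1add _ _ e h2
    rwa [add_comm lam, add_comm _ e, ← add_assoc] at h3
  · intro _ a ha j β hβ
    have hv0 : (g i).2 j ≠ 0 := by
      intro h; simp [h] at hβ
    obtain ⟨d, hd⟩ := exists_lpp_eq L1 ((g i).2 j) hv0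
    rw [lpp_eq_coe_iff] at hd
    have hc' : coeff (b + d) (p i * (g i).2 j) ≠ 0 := by
      rw [coeff_add_mul h1add hb.2 hd.2]; exact mul_ne_zero hb.1 hd.1
    obtain ⟨⟨j', y⟩, hy, hle⟩ := (bsle_max_iff L2 _ _).1 (hsig i) (j, b + d)
      (by rw [mem_msupport_iff]; exact hc')
    rw [mem_msupport_iff] at hy
    have h1 : L1.le (a + β) (b + d) := by
      refine L1.le_trans _ _ _ (le_add_right_of_le h1add β (hb.2 a ha)) ?_
      rw [add_comm b, add_comm b]
      exact le_add_right_of_le h1add b (hd.2 β hβ)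
    have h2 := L2.le_trans _ _ _ (module_le_of_le h21 j h1) hle
    have h3 := module_le_add h2add e h2
    simp only at h3
    rw [add_comm y e, add_comm _ e, ← add_assoc] at h3
    exact L2.le_trans _ _ _ h3 (hw j' y hy)

/-! ### Critical pairs and the induction on the leading monomial -/

/-- One orientation of `generator_sub_mem`: with `lam` the least common multiple of the leading
monomials, the difference is `x^e` times the S-polynomial; both generators have leading monomial
`e + lam`. -/
lemma generator_sub_mem_aux
    (h1add : ∀ a b c : Fin n →₀ ℕ, L1.lt a b → L1.lt (a + c) (b + c))
    (h2add : ∀ (p q : Fin m × (Fin n →₀ ℕ)) (γ : Fin n →₀ ℕ),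
      L2.lt p q → L2.lt (p.1, p.2 + γ) (q.1, q.2 + γ))
    (h21 : ∀ (i : Fin m) (α β : Fin n →₀ ℕ), L1.lt α β → L2.lt (i, α) (i, β))
    {gv hw : MvPolynomial (Fin n) k × (Fin m → MvPolynomial (Fin n) k)}
    {γ δ tg th lam e : Fin n →₀ ℕ}
    (hγ : lpp L1 gv.1 = (γ : WithBot (Fin n →₀ ℕ)))
    (hδ : lpp L1 hw.1 = (δ : WithBot (Fin n →₀ ℕ)))
    (htg : tg + γ = lam) (hth : th + δ = lam)
    (hsg : ∀ i β, coeff β (gv.2 i) ≠ 0 → L2.le (i, e + tg + β) σ)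
    (hsh : ∀ i β, coeff β (hw.2 i) ≠ 0 → L2.le (i, e + th + β) σ)
    (hrep : HasStdRep L1 L2 (↑G) (spolyP L1 gv hw tg th) (spolyV L1 gv hw tg th)) :
    monomial (e + tg) (1 : k) * gv.1 -
        (coeff γ gv.1 / coeff δ hw.1) • (monomial (e + th) (1 : k) * hw.1) ∈
      boundedSpan L1 L2 G σ (fun α => L1.lt α (e + lam)) := by
  have hγ' := (lpp_eq_coe_iff L1 _ _).1 hγ
  have hδ' := (lpp_eq_coe_iff L1 _ _).1 hδ
  have key := mem_of_hasStdRep (σ := σ) (e := e) (lam := lam) h1add h2add h21 hrep ?_ ?_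
  · convert key using 1
    rw [spolyP, plc_eq L1 _ _ hγ, plc_eq L1 _ _ hδ, mul_sub, ← mul_assoc, monomial_mul, one_mul,
      smul_eq_C_mul, mul_left_comm (monomial e (1 : k)), ← mul_assoc (monomial e (1 : k)),
      monomial_mul, one_mul]
  · intro α hα
    rw [spolyP, plc_eq L1 _ _ hγ, plc_eq L1 _ _ hδ, coeff_sub, coeff_C_mul] at hα
    have hle : L1.le α lam := by
      by_cases h : coeff α (monomial tg (1 : k) * gv.1) = 0
      · have h' : coeff α (monomial th (1 : k) * hw.1) ≠ 0 := by
          intro h'; simp [h, h'] at hα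
        obtain ⟨β, rfl, hβ⟩ := coeff_monomial_mul_ne_zero h'
        rw [← hth, add_comm th, add_comm th]
        exact le_add_right_of_le h1add th (hδ'.2 β hβ)
      · obtain ⟨β, rfl, hβ⟩ := coeff_monomial_mul_ne_zero h
        rw [← htg, add_comm tg, add_comm tg]
        exact le_add_right_of_le h1add tg (hγ'.2 β hβ)
    rcases (@le_iff_lt_or_eq _ L1.toPartialOrder α lam).1 hle with h | h
    · exact h
    · -- the leading terms cancel, so `lam` itself does not occur
      exfalso
      apply hα
      subst h
      have e1 : coeff α (monomial tg (1 : k) * gv.1) = coeff γ gv.1 := by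
        rw [← htg, coeff_monomial_mul, one_mul]
      have e2 : coeff α (monomial th (1 : k) * hw.1) = coeff δ hw.1 := by
        rw [← hth, coeff_monomial_mul, one_mul]
      rw [e1, e2, div_mul_cancel₀ _ hδ'.1, sub_self]
  · intro i β hβ
    rw [spolyV, coeff_sub, coeff_C_mul] at hβ
    by_cases h : coeff β (monomial tg (1 : k) * gv.2 i) = 0
    · have h' : coeff β (monomial th (1 : k) * hw.2 i) ≠ 0 := by
        intro h'; simp [h, h'] at hβ
      obtain ⟨β', rfl, hβ'⟩ := coeff_monomial_mul_ne_zero h'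
      rw [← add_assoc]
      exact hsh i β' hβ'
    · obtain ⟨β', rfl, hβ'⟩ := coeff_monomial_mul_ne_zero h
      rw [← add_assoc]
      exact hsg i β' hβ'

lemma mlcm_comm (γ δ : Fin n →₀ ℕ) : mlcm γ δ = mlcm δ γ := by
  ext i; simp [mlcm, max_comm]

lemma sub_add_mlcm (γ δ : Fin n →₀ ℕ) : mlcm γ δ - γ + γ = mlcm γ δ := by
  ext i; simp [mlcm]

/-- If `x^t x^γ` and `x^t' x^δ` are equal, then the two cofactors are those of the least
common multiple of `x^γ` and `x^δ`, times a common monomial `x^e`. -/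
lemma exists_common_factor {γ δ t t' : Fin n →₀ ℕ} (h : t + γ = t' + δ) :
    ∃ e, t = e + (mlcm γ δ - γ) ∧ t' = e + (mlcm γ δ - δ) ∧ t + γ = e + mlcm γ δ := by
  refine ⟨t + γ - mlcm γ δ, ?_, ?_, ?_⟩ <;> ext i <;>
    have hi := DFunLike.congr_fun h i <;>
    simp only [Finsupp.add_apply, Finsupp.tsub_apply, mlcm, Finsupp.zipWith_apply] at hi ⊢ <;>
    omega

/-- Two generators with the same leading monomial `τ` are proportional modulo `W (· ≺ τ)`. -/
lemma generator_sub_mem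
    (h1add : ∀ a b c : Fin n →₀ ℕ, L1.lt a b → L1.lt (a + c) (b + c))
    (h2add : ∀ (p q : Fin m × (Fin n →₀ ℕ)) (γ : Fin n →₀ ℕ),
      L2.lt p q → L2.lt (p.1, p.2 + γ) (q.1, q.2 + γ))
    (h21 : ∀ (i : Fin m) (α β : Fin n →₀ ℕ), L1.lt α β → L2.lt (i, α) (i, β))
    (hcrit : ∀ gv ∈ G, ∀ hw ∈ G, gv.1 ≠ 0 → hw.1 ≠ 0 →
      ∀ γ δ : Fin n →₀ ℕ,
        lpp L1 gv.1 = (γ : WithBot (Fin n →₀ ℕ)) →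
        lpp L1 hw.1 = (δ : WithBot (Fin n →₀ ℕ)) →
        bsle L2 (sig L2 (tsmul (mlcm γ δ - δ) hw.2)) (sig L2 (tsmul (mlcm γ δ - γ) gv.2)) →
        HasStdRep L1 L2 (↑G) (spolyP L1 gv hw (mlcm γ δ - γ) (mlcm γ δ - δ))
          (spolyV L1 gv hw (mlcm γ δ - γ) (mlcm γ δ - δ)))
    {gv hw : MvPolynomial (Fin n) k × (Fin m → MvPolynomial (Fin n) k)}
    (hgv : gv ∈ G) (hhw : hw ∈ G) {γ δ t t' : Fin n →₀ ℕ}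
    (hγ : lpp L1 gv.1 = (γ : WithBot (Fin n →₀ ℕ)))
    (hδ : lpp L1 hw.1 = (δ : WithBot (Fin n →₀ ℕ)))
    (htt : t + γ = t' + δ)
    (hsg : ∀ i β, coeff β (gv.2 i) ≠ 0 → L2.le (i, t + β) σ)
    (hsh : ∀ i β, coeff β (hw.2 i) ≠ 0 → L2.le (i, t' + β) σ) :
    monomial t (1 : k) * gv.1 -
        (coeff γ gv.1 / coeff δ hw.1) • (monomial t' (1 : k) * hw.1) ∈
      boundedSpan L1 L2 G σ (fun α => L1.lt α (t + γ)) := by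
  have hγ0 := ((lpp_eq_coe_iff L1 _ _).1 hγ).1
  have hδ0 := ((lpp_eq_coe_iff L1 _ _).1 hδ).1
  have hg0 : gv.1 ≠ 0 := by intro h; simp [h] at hγ0
  have hh0 : hw.1 ≠ 0 := by intro h; simp [h] at hδ0
  obtain ⟨e, rfl, rfl, he⟩ := exists_common_factor htt
  rw [he]
  have hlam : mlcm γ δ - δ + δ = mlcm γ δ := by rw [mlcm_comm]; exact sub_add_mlcm δ γ
  rcases bsle_total' L2 (sig L2 (tsmul (mlcm γ δ - δ) hw.2))
    (sig L2 (tsmul (mlcm γ δ - γ) gv.2)) with h | h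
  · exact generator_sub_mem_aux h1add h2add h21 hγ hδ (sub_add_mlcm γ δ) hlam hsg hsh
      (hcrit gv hgv hw hhw hg0 hh0 γ δ hγ hδ h)
  · rw [mlcm_comm γ δ] at h
    have hrep := hcrit hw hhw gv hgv hh0 hg0 δ γ hδ hγ h
    rw [mlcm_comm δ γ] at hrep
    have key := generator_sub_mem_aux h1add h2add h21 hδ hγ hlam (sub_add_mlcm γ δ) hsh hsg hrep
    -- the opposite orientation differs by the nonzero scalar `-lc(g)/lc(h)`
    have key2 := Submodule.smul_mem _ (-(coeff γ gv.1 / coeff δ hw.1)) key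
    convert key2 using 1
    have hc : (coeff γ gv.1 / coeff δ hw.1) * (coeff δ hw.1 / coeff γ gv.1) = 1 := by
      field_simp
    rw [smul_sub, smul_smul, neg_mul, hc, neg_smul, neg_smul, one_smul]
    abel

/-- The leading monomial of every nonzero element of `W (· ⪯ τ)` is the leading monomial of a
generator. -/
lemma exists_generator_of_mem
    (h1add : ∀ a b c : Fin n →₀ ℕ, L1.lt a b → L1.lt (a + c) (b + c))
    (h1wf : WellFounded L1.lt)
    (h2add : ∀ (p q : Fin m × (Fin n →₀ ℕ)) (γ : Fin n →₀ ℕ),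
      L2.lt p q → L2.lt (p.1, p.2 + γ) (q.1, q.2 + γ))
    (h21 : ∀ (i : Fin m) (α β : Fin n →₀ ℕ), L1.lt α β → L2.lt (i, α) (i, β))
    (hcrit : ∀ gv ∈ G, ∀ hw ∈ G, gv.1 ≠ 0 → hw.1 ≠ 0 →
      ∀ γ δ : Fin n →₀ ℕ,
        lpp L1 gv.1 = (γ : WithBot (Fin n →₀ ℕ)) →
        lpp L1 hw.1 = (δ : WithBot (Fin n →₀ ℕ)) →
        bsle L2 (sig L2 (tsmul (mlcm γ δ - δ) hw.2)) (sig L2 (tsmul (mlcm γ δ - γ) gv.2)) →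
        HasStdRep L1 L2 (↑G) (spolyP L1 gv hw (mlcm γ δ - γ) (mlcm γ δ - δ))
          (spolyV L1 gv hw (mlcm γ δ - γ) (mlcm γ δ - δ)))
    (τ : Fin n →₀ ℕ) : ∀ f : MvPolynomial (Fin n) k, f ≠ 0 →
      f ∈ boundedSpan L1 L2 G σ (fun α => L1.le α τ) →
      ∃ gv ∈ G, ∃ t γ : Fin n →₀ ℕ, lpp L1 gv.1 = (γ : WithBot (Fin n →₀ ℕ)) ∧
        lpp L1 f = ((t + γ : Fin n →₀ ℕ) : WithBot (Fin n →₀ ℕ)) ∧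
        (∀ i β, coeff β (gv.2 i) ≠ 0 → L2.le (i, t + β) σ) := by
  induction τ using h1wf.induction with
  | _ τ ih =>
  intro f hf0 hf
  have hlower : f ∈ boundedSpan L1 L2 G σ (fun α => L1.lt α τ) →
      ∃ gv ∈ G, ∃ t γ : Fin n →₀ ℕ, lpp L1 gv.1 = (γ : WithBot (Fin n →₀ ℕ)) ∧
        lpp L1 f = ((t + γ : Fin n →₀ ℕ) : WithBot (Fin n →₀ ℕ)) ∧
        (∀ i β, coeff β (gv.2 i) ≠ 0 → L2.le (i, t + β) σ) := by
    intro h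
    rcases exists_bound_of_mem h with h | ⟨τ', hτ', h⟩
    · exact absurd h hf0
    · exact ih τ' hτ' f hf0 h
  by_cases hex : ∃ hw ∈ G, ∃ t δ : Fin n →₀ ℕ, lpp L1 hw.1 = (δ : WithBot (Fin n →₀ ℕ)) ∧
      t + δ = τ ∧ (∀ i β, coeff β (hw.2 i) ≠ 0 → L2.le (i, t + β) σ)
  · obtain ⟨hw, hhw, t', δ, hδ, rfl, hsh⟩ := hex
    have hδ' := (lpp_eq_coe_iff L1 _ _).1 hδ
    have hsub : boundedSpan L1 L2 G σ (fun α => L1.le α (t' + δ)) ≤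
        boundedSpan L1 L2 G σ (fun α => L1.lt α (t' + δ)) ⊔
          Submodule.span k {monomial t' (1 : k) * hw.1} := by
      refine Submodule.span_le.2 ?_
      rintro _ ⟨gv, hgv, t, γ, hγ, hP, hsg, rfl⟩
      rcases (@le_iff_lt_or_eq _ L1.toPartialOrder _ _).1 hP with h | h
      · exact Submodule.mem_sup_left (Submodule.subset_span ⟨gv, hgv, t, γ, hγ, h, hsg, rfl⟩)
      · have key := generator_sub_mem h1add h2add h21 hcrit hgv hhw hγ hδ h hsg hsh
        rw [h] at key
        refine Submodule.mem_sup.2 ⟨_, key, _, Submodule.smul_mem _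
          (coeff γ gv.1 / coeff δ hw.1) (Submodule.mem_span_singleton_self _), ?_⟩
        exact sub_add_cancel _ _
    obtain ⟨w, hwm, z, hz, hwz⟩ := Submodule.mem_sup.1 (hsub hf)
    obtain ⟨c, rfl⟩ := Submodule.mem_span_singleton.1 hz
    by_cases hc : c = 0
    · apply hlower
      rw [← hwz, hc, zero_smul, add_zero]
      exact hwm
    · have hwlt := lt_of_coeff_ne_zero h1add hwm
      refine ⟨hw, hhw, t', δ, hδ, ?_, hsh⟩
      rw [lpp_eq_coe_iff, ← hwz]
      constructor
      · have hw0 : coeff (t' + δ) w = 0 := by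
          by_contra h
          exact @lt_irrefl _ L1.toPreorder _ (hwlt _ h)
        rw [coeff_add, hw0, zero_add, coeff_smul, coeff_monomial_mul, one_mul, smul_eq_mul]
        exact mul_ne_zero hc hδ'.1
      · intro β hβ
        by_cases h : coeff β w = 0
        · have h' : coeff β (monomial t' (1 : k) * hw.1) ≠ 0 := by
            intro h'; simp [h, h'] at hβ
          obtain ⟨β', rfl, hβ'⟩ := coeff_monomial_mul_ne_zero h'
          rw [add_comm t', add_comm t']
          exact le_add_right_of_le h1add t' (hδ'.2 β' hβ')
        · exact @le_of_lt _ L1.toPreorder _ _ (hwlt _ h)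
  · apply hlower
    refine (Submodule.span_mono ?_ : boundedSpan L1 L2 G σ (fun α => L1.le α τ) ≤ _) hf
    rintro _ ⟨gv, hgv, t, γ, hγ, hP, hsg, rfl⟩
    refine ⟨gv, hgv, t, γ, hγ, ?_, hsg, rfl⟩
    rcases (@le_iff_lt_or_eq _ L1.toPartialOrder _ _).1 hP with h | h
    · exact h
    · exact absurd ⟨gv, hgv, t, γ, hγ, h, hsg⟩ hex

end Span

end Aux

/-- If for every critical pair of two elements of `G` the corresponding S-polynomial has
a standard representation w.r.t. `G`, then `G` is a labeled Gröbner basis of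
`(f₁, …, f_m)`.  (Here `G` is a finite set of labeled polynomials containing every
`fᵢ^[eᵢ]`.) -/
theorem labeledGB_from_spolys (k : Type*) [Field k] (n m : ℕ)
    (L1 : LinearOrder (Fin n →₀ ℕ)) (L2 : LinearOrder (Fin m × (Fin n →₀ ℕ)))
    (h1add : ∀ a b c : Fin n →₀ ℕ, L1.lt a b → L1.lt (a + c) (b + c))
    (h1wf : WellFounded L1.lt)
    (h2add : ∀ (p q : Fin m × (Fin n →₀ ℕ)) (γ : Fin n →₀ ℕ),
      L2.lt p q → L2.lt (p.1, p.2 + γ) (q.1, q.2 + γ))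
    (h21 : ∀ (i : Fin m) (α β : Fin n →₀ ℕ), L1.lt α β → L2.lt (i, α) (i, β))
    (fvec : Fin m → MvPolynomial (Fin n) k)
    (G : Finset (MvPolynomial (Fin n) k × (Fin m → MvPolynomial (Fin n) k)))
    (hGlabeled : ∀ p ∈ G, p.1 = dotf fvec p.2)
    (hGe : ∀ i : Fin m,
      (fvec i, (Pi.single i (1 : MvPolynomial (Fin n) k) :
        Fin m → MvPolynomial (Fin n) k)) ∈ G)
    (hcrit : ∀ gv ∈ G, ∀ hw ∈ G, gv.1 ≠ 0 → hw.1 ≠ 0 →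
      ∀ γ δ : Fin n →₀ ℕ,
        lpp L1 gv.1 = (γ : WithBot (Fin n →₀ ℕ)) →
        lpp L1 hw.1 = (δ : WithBot (Fin n →₀ ℕ)) →
        -- orientation: `(x^{t_g}, gv, x^{t_h}, hw)` is the critical pair
        bsle L2 (sig L2 (tsmul (mlcm γ δ - δ) hw.2)) (sig L2 (tsmul (mlcm γ δ - γ) gv.2)) →
        HasStdRep L1 L2 (↑G) (spolyP L1 gv hw (mlcm γ δ - γ) (mlcm γ δ - δ))
          (spolyV L1 gv hw (mlcm γ δ - γ) (mlcm γ δ - δ))) :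
    IsLabeledGB L1 L2 fvec (↑G) := by
  intro f u hfu hf0
  obtain ⟨σ, hσ⟩ : ∃ σ : Fin m × (Fin n →₀ ℕ), sig L2 u = (σ : WithBot _) := by
    have hne : (msupport u).Nonempty := by
      by_contra h
      rw [Finset.not_nonempty_iff_eq_empty] at h
      apply hf0
      rw [hfu, dotf]
      refine Finset.sum_eq_zero fun i _ => ?_
      have hui : u i = 0 := by
        ext α
        by_contra hα
        have hmem := (mem_msupport_iff u (i, α)).2 (by simpa using hα)
        rw [h] at hmem
        simp at hmem
      rw [hui, zero_mul]
    obtain ⟨a, ha⟩ := exists_max_mem L2 _ hne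
    exact ⟨a, (max_eq_coe_iff L2 _ _).2 ha⟩
  have hσ' := (sig_eq_coe_iff L2 u σ).1 hσ
  have hmem : f ∈ boundedSpan L1 L2 G σ (fun _ => True) := by
    rw [hfu, dotf]
    refine Submodule.sum_mem _ fun i _ => ?_
    have h := monomial_mul_mem (L1 := L1) (L2 := L2) (σ := σ) (P := fun _ => True) (hGe i) 0 (u i)
      (fun _ _ _ _ => trivial) ?_
    · simpa using h
    · intro _ a ha j β hβ
      by_cases hji : j = i
      · subst hji
        have hβ0 : β = 0 := by
          by_contra hne
          simp [coeff_one, Ne.symm hne] at hβ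
        subst hβ0
        simpa using hσ'.2 j a ha
      · simp [hji] at hβ
  rcases exists_bound_of_mem hmem with h | ⟨τ, -, h⟩
  · exact absurd h hf0
  obtain ⟨gv, hgv, t, γ, hγ, hft, hs⟩ :=
    exists_generator_of_mem h1add h1wf h2add h21 hcrit τ f hf0 h
  refine ⟨gv, hgv, ?_, t, ?_, ?_⟩
  · intro h0
    have hne := ((lpp_eq_coe_iff L1 _ _).1 hγ).1
    simp [h0] at hne
  · rw [hγ, hft]
    rfl
  · refine (bsle_max_iff L2 _ _).2 ?_
    rintro ⟨i, α⟩ hα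
    rw [mem_msupport_iff] at hα
    obtain ⟨β, rfl, hβ⟩ := coeff_monomial_mul_ne_zero hα
    exact ⟨σ, (mem_msupport_iff u σ).2 hσ'.1, hs i β hβ⟩
end
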